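/- Let (J, v, π) be a classical solution of (E1)–(E3) on [0,L]×[0,T] with boundary condition v(0,t) = v(L,t) = 0, and assume additionally that ∂_y J exists with ∂_t ∂_y J continuous on [0,L]×[0,T]. Define B(y,t) := exp( (1/μ) ∫₀^y ρ₀(ξ)( v₀(ξ) − v(ξ,t) ) dξ ). Then there exists a continuous function H : [0,T] → (0,∞) with H(0) = 1 such that for all (y,t) ∈ [0,L]×[0,T]: ( J(y,t)/J₀(y) ) · H(t) · B(y,t) = exp( (1/μ) ∫₀ᵗ π(y,τ) dτ ). -/

import Mathlib

open Set MeasureTheory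

/-- A classical solution `(J, v, π)` of the Lagrangian 1D non-heat-conductive compressible
Navier–Stokes system (E1)–(E3) on `[0,L] × [0,T]`, together with its partial derivatives
`Jt = ∂ₜJ`, `vy = ∂_y v`, `vt = ∂ₜv`, `w = ∂_y((∂_y v)/J)`, `πy = ∂_y π`, `πt = ∂ₜπ`,
all continuous on `[0,L] × [0,T]`, and `J > 0` everywhere. -/
structure ClassicalSolution (L T μ γ : ℝ) (ρ₀ : ℝ → ℝ)
    (J v π Jt vy vt w πy πt : ℝ → ℝ → ℝ) : Prop where
  Jpos : ∀ y ∈ Set.Icc (0:ℝ) L, ∀ t ∈ Set.Icc (0:ℝ) T, 0 < J y t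
  contJ : ContinuousOn (fun p : ℝ × ℝ => J p.1 p.2) (Set.Icc 0 L ×ˢ Set.Icc 0 T)
  contv : ContinuousOn (fun p : ℝ × ℝ => v p.1 p.2) (Set.Icc 0 L ×ˢ Set.Icc 0 T)
  contPi : ContinuousOn (fun p : ℝ × ℝ => π p.1 p.2) (Set.Icc 0 L ×ˢ Set.Icc 0 T)
  hJt : ∀ y ∈ Set.Icc (0:ℝ) L, ∀ t ∈ Set.Icc (0:ℝ) T,
    HasDerivWithinAt (fun s => J y s) (Jt y t) (Set.Icc 0 T) t
  hvy : ∀ y ∈ Set.Icc (0:ℝ) L, ∀ t ∈ Set.Icc (0:ℝ) T,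
    HasDerivWithinAt (fun x => v x t) (vy y t) (Set.Icc 0 L) y
  hvt : ∀ y ∈ Set.Icc (0:ℝ) L, ∀ t ∈ Set.Icc (0:ℝ) T,
    HasDerivWithinAt (fun s => v y s) (vt y t) (Set.Icc 0 T) t
  hw : ∀ y ∈ Set.Icc (0:ℝ) L, ∀ t ∈ Set.Icc (0:ℝ) T,
    HasDerivWithinAt (fun x => vy x t / J x t) (w y t) (Set.Icc 0 L) y
  hPiy : ∀ y ∈ Set.Icc (0:ℝ) L, ∀ t ∈ Set.Icc (0:ℝ) T,
    HasDerivWithinAt (fun x => π x t) (πy y t) (Set.Icc 0 L) y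
  hPit : ∀ y ∈ Set.Icc (0:ℝ) L, ∀ t ∈ Set.Icc (0:ℝ) T,
    HasDerivWithinAt (fun s => π y s) (πt y t) (Set.Icc 0 T) t
  contJt : ContinuousOn (fun p : ℝ × ℝ => Jt p.1 p.2) (Set.Icc 0 L ×ˢ Set.Icc 0 T)
  contvy : ContinuousOn (fun p : ℝ × ℝ => vy p.1 p.2) (Set.Icc 0 L ×ˢ Set.Icc 0 T)
  contvt : ContinuousOn (fun p : ℝ × ℝ => vt p.1 p.2) (Set.Icc 0 L ×ˢ Set.Icc 0 T)
  contw : ContinuousOn (fun p : ℝ × ℝ => w p.1 p.2) (Set.Icc 0 L ×ˢ Set.Icc 0 T)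
  contPiy : ContinuousOn (fun p : ℝ × ℝ => πy p.1 p.2) (Set.Icc 0 L ×ˢ Set.Icc 0 T)
  contPit : ContinuousOn (fun p : ℝ × ℝ => πt p.1 p.2) (Set.Icc 0 L ×ˢ Set.Icc 0 T)
  eq1 : ∀ y ∈ Set.Icc (0:ℝ) L, ∀ t ∈ Set.Icc (0:ℝ) T, Jt y t = vy y t
  eq2 : ∀ y ∈ Set.Icc (0:ℝ) L, ∀ t ∈ Set.Icc (0:ℝ) T,
    ρ₀ y * vt y t - μ * w y t + πy y t = 0
  eq3 : ∀ y ∈ Set.Icc (0:ℝ) L, ∀ t ∈ Set.Icc (0:ℝ) T,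
    πt y t + γ * (vy y t / J y t) * π y t = μ * (γ - 1) * (vy y t / J y t) ^ 2

theorem ftc_aux {B b : ℝ} (hb : b ∈ Icc (0:ℝ) B) {f f' : ℝ → ℝ}
    (hd : ∀ x ∈ Icc (0:ℝ) B, HasDerivWithinAt f (f' x) (Icc 0 B) x)
    (hc : ContinuousOn f' (Icc 0 B)) :
    ∫ x in (0:ℝ)..b, f' x = f b - f 0 := by
  have hsub : Icc (0:ℝ) b ⊆ Icc 0 B := Icc_subset_Icc_right hb.2
  apply intervalIntegral.integral_eq_sub_of_hasDerivAt_of_le hb.1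
  · exact fun x hx => ((hd x (hsub hx)).continuousWithinAt).mono hsub
  · intro x hx
    exact (hd x (hsub (Ioo_subset_Icc_self hx))).hasDerivAt
      (Icc_mem_nhds hx.1 (lt_of_lt_of_le hx.2 hb.2))
  · apply ContinuousOn.intervalIntegrable
    rw [uIcc_of_le hb.1]
    exact hc.mono hsub

theorem slice_fst {L T : ℝ} {f : ℝ → ℝ → ℝ}
    (h : ContinuousOn (fun p : ℝ × ℝ => f p.1 p.2) (Icc 0 L ×ˢ Icc 0 T))
    {t : ℝ} (ht : t ∈ Icc (0:ℝ) T) : ContinuousOn (fun y => f y t) (Icc 0 L) :=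
  h.comp (f := fun y : ℝ => (y, t)) (by fun_prop) (fun y hy => ⟨hy, ht⟩)

theorem slice_snd {L T : ℝ} {f : ℝ → ℝ → ℝ}
    (h : ContinuousOn (fun p : ℝ × ℝ => f p.1 p.2) (Icc 0 L ×ˢ Icc 0 T))
    {y : ℝ} (hy : y ∈ Icc (0:ℝ) L) : ContinuousOn (fun t => f y t) (Icc 0 T) :=
  h.comp (f := fun t : ℝ => (y, t)) (by fun_prop) (fun t ht => ⟨hy, ht⟩)

/-- (Representation formula (N1), Section 2.) There is a positive
continuous function `H` of time with `H(0) = 1` such that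
`(J/J₀) H B = exp((1/μ) ∫₀ᵗ π dτ)`, where
`B(y,t) = exp((1/μ) ∫₀ʸ ρ₀ (v₀ - v(·,t)) dξ)`. -/
theorem representation_formula_N1
    (L T μ γ : ℝ) (hL : 0 < L) (hT : 0 < T) (hμ : 0 < μ) (hγ : 1 < γ)
    (ρ₀ : ℝ → ℝ) (hρ₀ : ContinuousOn ρ₀ (Icc 0 L))
    (J v π Jt vy vt w πy πt Jy Jyt : ℝ → ℝ → ℝ)
    (hsol : ClassicalSolution L T μ γ ρ₀ J v π Jt vy vt w πy πt)
    (hbc : ∀ t ∈ Icc (0:ℝ) T, v 0 t = 0 ∧ v L t = 0)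
    (hJy : ∀ y ∈ Icc (0:ℝ) L, ∀ t ∈ Icc (0:ℝ) T,
      HasDerivWithinAt (fun x => J x t) (Jy y t) (Icc 0 L) y)
    (hJyt : ∀ y ∈ Icc (0:ℝ) L, ∀ t ∈ Icc (0:ℝ) T,
      HasDerivWithinAt (fun s => Jy y s) (Jyt y t) (Icc 0 T) t)
    (hJytcont : ContinuousOn (fun p : ℝ × ℝ => Jyt p.1 p.2) (Icc 0 L ×ˢ Icc 0 T)) :
    ∃ H : ℝ → ℝ, ContinuousOn H (Icc 0 T) ∧ (∀ t ∈ Icc (0:ℝ) T, 0 < H t) ∧ H 0 = 1 ∧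
      ∀ y ∈ Icc (0:ℝ) L, ∀ t ∈ Icc (0:ℝ) T,
        (J y t / J y 0) * H t
            * Real.exp ((1 / μ) * ∫ ξ in (0:ℝ)..y, ρ₀ ξ * (v ξ 0 - v ξ t))
          = Real.exp ((1 / μ) * ∫ τ in (0:ℝ)..t, π y τ) := by
  have hy0 : (0:ℝ) ∈ Icc (0:ℝ) L := ⟨le_rfl, hL.le⟩
  have ht0 : (0:ℝ) ∈ Icc (0:ℝ) T := ⟨le_rfl, hT.le⟩
  have cq : ContinuousOn (fun p : ℝ × ℝ => vy p.1 p.2 / J p.1 p.2) (Icc 0 L ×ˢ Icc 0 T) :=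
    hsol.contvy.div hsol.contJ (fun p hp => (hsol.Jpos _ hp.1 _ hp.2).ne')
  have cF : ContinuousOn (fun p : ℝ × ℝ => μ * (vy p.1 p.2 / J p.1 p.2) - π p.1 p.2)
      (Icc 0 L ×ˢ Icc 0 T) := (continuousOn_const.mul cq).sub hsol.contPi
  have cG : ContinuousOn (fun p : ℝ × ℝ => ρ₀ p.1 * vt p.1 p.2) (Icc 0 L ×ˢ Icc 0 T) :=
    (hρ₀.comp continuousOn_fst (fun p hp => hp.1)).mul hsol.contvt
  have ii : ∀ {f : ℝ → ℝ}, ContinuousOn f (Icc 0 T) → ∀ t ∈ Icc (0:ℝ) T,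
      IntervalIntegrable f volume 0 t := by
    intro f hf t ht
    apply ContinuousOn.intervalIntegrable
    rw [uIcc_of_le ht.1]
    exact hf.mono (Icc_subset_Icc_right ht.2)
  let F : ℝ → ℝ → ℝ := fun y s => μ * (vy y s / J y s) - π y s
  have cF' : ∀ y ∈ Icc (0:ℝ) L, ContinuousOn (fun s => F y s) (Icc 0 T) :=
    fun y hy => slice_snd (f := F) cF hy
  refine ⟨fun t => Real.exp (-(1 / μ) * ∫ s in (0:ℝ)..t, F 0 s), ?_, ?_, ?_, ?_⟩
  · have h := intervalIntegral.continuousOn_primitive_interval' (ii (cF' 0 hy0) T ⟨hT.le, le_rfl⟩)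
      left_mem_uIcc
    rw [uIcc_of_le hT.le] at h
    exact Real.continuous_exp.comp_continuousOn (continuousOn_const.mul h)
  · intro t _
    positivity
  · simp
  intro y hy t ht
  -- flux identity in space
  have flux : ∀ s ∈ Icc (0:ℝ) T, ∫ ξ in (0:ℝ)..y, ρ₀ ξ * vt ξ s = F y s - F 0 s := by
    intro s hs
    apply ftc_aux (B := L) hy (f := fun x => F x s)
    · intro x hx
      have h := ((hsol.hw x hx s hs).const_mul μ).sub (hsol.hPiy x hx s hs)
      have e : ρ₀ x * vt x s = μ * w x s - πy x s := by linarith [hsol.eq2 x hx s hs]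
      rw [e]
      exact h
    · exact slice_fst (f := fun a b => ρ₀ a * vt a b) cG hs
  -- log J
  have hlog : ∫ s in (0:ℝ)..t, vy y s / J y s = Real.log (J y t) - Real.log (J y 0) := by
    apply ftc_aux (B := T) ht (f := fun s => Real.log (J y s))
    · intro s hs
      rw [← hsol.eq1 y hy s hs]
      exact (hsol.hJt y hy s hs).log (hsol.Jpos y hy s hs).ne'
    · exact slice_snd (f := fun a b => vy a b / J a b) cq hy
  -- time integral of vt
  have hv : ∀ ξ ∈ Icc (0:ℝ) L, ∫ s in (0:ℝ)..t, ρ₀ ξ * vt ξ s = - (ρ₀ ξ * (v ξ 0 - v ξ t)) := by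
    intro ξ hξ
    rw [intervalIntegral.integral_const_mul,
      ftc_aux (B := T) ht (f := fun s => v ξ s) (f' := fun s => vt ξ s)
        (fun s hs => hsol.hvt ξ hξ s hs) (slice_snd hsol.contvt hξ)]
    ring
  have swap : ∫ s in (0:ℝ)..t, ∫ ξ in (0:ℝ)..y, ρ₀ ξ * vt ξ s
      = ∫ ξ in (0:ℝ)..y, ∫ s in (0:ℝ)..t, ρ₀ ξ * vt ξ s := by
    symm
    apply intervalIntegral_intervalIntegral_swap (F := fun ξ s => ρ₀ ξ * vt ξ s)
    have h1 : IntegrableOn (fun p : ℝ × ℝ => ρ₀ p.1 * vt p.1 p.2) (Icc 0 L ×ˢ Icc 0 T) :=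
      cG.integrableOn_compact (isCompact_Icc.prod isCompact_Icc)
    refine h1.mono_set (prod_mono ?_ ?_)
    · rw [uIoc_of_le hy.1]
      exact fun x hx => ⟨hx.1.le, hx.2.trans hy.2⟩
    · rw [uIoc_of_le ht.1]
      exact fun x hx => ⟨hx.1.le, hx.2.trans ht.2⟩
  have hA : ∫ s in (0:ℝ)..t, ∫ ξ in (0:ℝ)..y, ρ₀ ξ * vt ξ s
      = (∫ s in (0:ℝ)..t, F y s) - ∫ s in (0:ℝ)..t, F 0 s := by
    rw [← intervalIntegral.integral_sub (ii (cF' y hy) t ht) (ii (cF' 0 hy0) t ht)]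
    apply intervalIntegral.integral_congr
    intro s hs
    rw [uIcc_of_le ht.1] at hs
    exact flux s ⟨hs.1, hs.2.trans ht.2⟩
  have hB : ∫ ξ in (0:ℝ)..y, ∫ s in (0:ℝ)..t, ρ₀ ξ * vt ξ s
      = - ∫ ξ in (0:ℝ)..y, ρ₀ ξ * (v ξ 0 - v ξ t) := by
    rw [← intervalIntegral.integral_neg]
    apply intervalIntegral.integral_congr
    intro s hs
    rw [uIcc_of_le hy.1] at hs
    exact hv s ⟨hs.1, hs.2.trans hy.2⟩
  have hC : ∫ s in (0:ℝ)..t, F y s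
      = μ * (Real.log (J y t) - Real.log (J y 0)) - ∫ s in (0:ℝ)..t, π y s := by
    rw [← hlog, ← intervalIntegral.integral_const_mul]
    exact intervalIntegral.integral_sub
      ((ii (slice_snd (f := fun a b => vy a b / J a b) cq hy) t ht).const_mul μ)
      (ii (slice_snd hsol.contPi hy) t ht)
  have hJ : J y t / J y 0 = Real.exp (Real.log (J y t) - Real.log (J y 0)) := by
    rw [Real.exp_sub, Real.exp_log (hsol.Jpos y hy t ht), Real.exp_log (hsol.Jpos y hy 0 ht0)]
  have key : (∫ τ in (0:ℝ)..t, π y τ) = μ * (Real.log (J y t) - Real.log (J y 0))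
      - (∫ s in (0:ℝ)..t, F 0 s) + ∫ ξ in (0:ℝ)..y, ρ₀ ξ * (v ξ 0 - v ξ t) := by
    linarith
  rw [hJ, key, ← Real.exp_add, ← Real.exp_add]
  congr 1
  field_simp
  ring
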